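/- For the convex-aggregation procedure described in the context, with Ψ a (0,p)-good set with respect to G_{Λ_ε}, the selected estimator F̂ = F_λ̂ satisfies E‖F̂ − f‖_p ≤ (2·max_{ψ∈Ψ} ‖ψ‖_q + 1)·min_{λ∈Λ} ‖f − F_λ‖_p + 2κε·max_{ψ∈Ψ} ‖ψ‖_2 + 2Lε·(1 + max_{ψ∈Ψ} ‖ψ‖_q) + 2Lδ. -/

import Mathlib

open MeasureTheory
open scoped ENNReal

/-- Lebesgue measure restricted to the unit cube `[0,1]^d`. -/
noncomputable def cubeMeasure (d : ℕ) : Measure (Fin d → ℝ) :=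
  volume.restrict (Set.Icc 0 1)

/-- The real-valued `L^r` norm on the unit cube. -/
noncomputable def Lnorm {d : ℕ} (r : ℝ≥0∞) (g : (Fin d → ℝ) → ℝ) : ℝ :=
  (eLpNorm g r (cubeMeasure d)).toReal

/-- The simplex `Λ = {λ : λ_i ≥ 0, Σ λ_i ≤ 1}` in `ℝ^N`. -/
def simplex (N : ℕ) : Set (Fin N → ℝ) :=
  {l | (∀ i, 0 ≤ l i) ∧ ∑ i, l i ≤ 1}

/-! Integration against a probe `ψ` is a functional of norm at most `‖ψ‖_q` on `L^p`. While the
noise stays below its thresholds, the criterion at `λ` is at most `‖f - F_λ‖_p`, so its minimizer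
`λ'` satisfies `|∫ ψ (f - F_λ')| ≤ ‖ψ‖_q ‖f - F_λ‖_p + 2 ε κ ‖ψ‖_2` for every `λ` and
every probe `ψ`. Moving `λ'` and `λ` to net points costs `L ε` each, and the distance between the
net points is the integral of their difference against a single probe. On the remaining event,
of probability at most `δ`, the error is at most `2 L`. -/

lemma integral_le_add_mul_measureReal {Ω : Type*} [MeasurableSpace Ω] {P : Measure Ω}
    [IsProbabilityMeasure P] {X : Ω → ℝ} {S : Set Ω} {C D : ℝ} (hX : Integrable X P)
    (hC : 0 ≤ C) (hXD : ∀ ω, X ω ≤ D) (hXC : ∀ ω ∉ S, X ω ≤ C) :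
    ∫ ω, X ω ∂P ≤ C + D * P.real S := by
  set T := toMeasurable P S
  have hT : MeasurableSet T := measurableSet_toMeasurable P S
  have hind : Integrable (T.indicator fun _ => D) P := (integrable_const D).indicator hT
  calc ∫ ω, X ω ∂P ≤ ∫ ω, (C + T.indicator (fun _ => D) ω) ∂P := by
        refine integral_mono hX ((integrable_const C).add hind) fun ω => ?_
        by_cases hω : ω ∈ T
        · simpa only [Set.indicator_of_mem hω] using (hXD ω).trans (le_add_of_nonneg_left hC)
        · simpa only [Set.indicator_of_notMem hω, add_zero] using
            hXC ω fun hS => hω (subset_toMeasurable P S hS)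
    _ = C + D * P.real S := by
        rw [integral_add (integrable_const C) hind, integral_indicator_const D hT,
          integral_const, probReal_univ, one_smul, smul_eq_mul, mul_comm D, measureReal_def,
          measure_toMeasurable, ← measureReal_def]

section ProbeCriterion

variable {E : Type*} [SeminormedAddCommGroup E] [NormedSpace ℝ E]
  {K : Type*} {φ : K → StrongDual ℝ E} {a b z : K → ℝ}

/-- The selection criterion of the aggregation procedure at a candidate whose deviation from the
target is `x`: the probe `φ k` observes `x` with noise `z k`, `b k` is its noise threshold and `a k`
its normalizing weight. -/
noncomputable def probeCriterion (φ : K → StrongDual ℝ E) (a b z : K → ℝ) (x : E) : ℝ :=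
  ⨆ k, (|φ k x + z k| - b k) / a k

lemma probeCriterion_le_norm [Nonempty K] (ha : ∀ k, 0 < a k) (hφ : ∀ k, ‖φ k‖ ≤ a k)
    (hz : ∀ k, |z k| ≤ b k) (x : E) : probeCriterion φ a b z x ≤ ‖x‖ := by
  refine ciSup_le fun k => ?_
  rw [div_le_iff₀' (ha k), sub_le_iff_le_add]
  exact (abs_add_le _ _).trans (add_le_add ((φ k).le_of_opNorm_le (hφ k) x) (hz k))

lemma abs_apply_le_of_probeCriterion_le [Finite K] {k : K} {x : E} {r : ℝ} (ha : 0 < a k)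
    (hz : |z k| ≤ b k) (hr : probeCriterion φ a b z x ≤ r) : |φ k x| ≤ a k * r + 2 * b k := by
  have hk : (|φ k x + z k| - b k) / a k ≤ r := (le_ciSup (Set.finite_range _).bddAbove k).trans hr
  rw [div_le_iff₀' ha] at hk
  have habs : |φ k x| ≤ |φ k x + z k| + |z k| := by
    simpa using abs_sub (φ k x + z k) (z k)
  linarith

lemma norm_sub_le_of_probeCriterion_le [Finite K] [Nonempty K] {A B η : ℝ} {f g h g' h' : E}
    (ha : ∀ k, 0 < a k) (haA : ∀ k, a k ≤ A) (hbB : ∀ k, b k ≤ B) (hφ : ∀ k, ‖φ k‖ ≤ a k)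
    (hz : ∀ k, |z k| ≤ b k) (hg : ‖g - g'‖ ≤ η) (hh : ‖h - h'‖ ≤ η)
    (hgood : g' ≠ h' → ∃ k, φ k (g' - h') = ‖g' - h'‖)
    (hgh : probeCriterion φ a b z (f - g) ≤ probeCriterion φ a b z (f - h)) :
    ‖g' - h'‖ ≤ 2 * A * ‖f - h‖ + 2 * B + 2 * η * A := by
  have hA : 0 ≤ A := (ha (Classical.arbitrary K)).le.trans (haA _)
  have hB : 0 ≤ B := (abs_nonneg _).trans ((hz (Classical.arbitrary K)).trans (hbB _))
  have hη : 0 ≤ η := (norm_nonneg _).trans hg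
  rcases eq_or_ne g' h' with rfl | hne
  · rw [sub_self, norm_zero]
    positivity
  obtain ⟨k, hk⟩ := hgood hne
  have hbound {x : E} {r : ℝ} (hx : ‖x‖ ≤ r) : |φ k x| ≤ A * r :=
    (φ k).le_of_opNorm_le_of_le ((hφ k).trans (haA k)) hx
  have hfg : |φ k (f - g)| ≤ A * ‖f - h‖ + 2 * B := by
    calc |φ k (f - g)| ≤ a k * ‖f - h‖ + 2 * b k :=
          abs_apply_le_of_probeCriterion_le (ha k) (hz k)
            (hgh.trans (probeCriterion_le_norm ha hφ hz _))
      _ ≤ A * ‖f - h‖ + 2 * B := by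
          gcongr
          exacts [haA k, hbB k]
  calc ‖g' - h'‖ = φ k (f - h) + φ k (h - h') - φ k (g - g') - φ k (f - g) := by
        rw [← hk, ← map_add, ← map_sub, ← map_sub]
        congr 1
        abel
    _ ≤ |φ k (f - h)| + |φ k (h - h')| + |φ k (g - g')| + |φ k (f - g)| := by
        linarith [le_abs_self (φ k (f - h)), le_abs_self (φ k (h - h')),
          neg_abs_le (φ k (g - g')), neg_abs_le (φ k (f - g))]
    _ ≤ A * ‖f - h‖ + A * η + A * η + (A * ‖f - h‖ + 2 * B) := by
        gcongr
        exacts [hbound le_rfl, hbound hh, hbound hg]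
    _ = 2 * A * ‖f - h‖ + 2 * B + 2 * η * A := by ring

section OracleInequality

variable [Finite K] [Nonempty K] {Θ : Type*} {f : E} {G : Θ → E} {T : Set Θ} {A B η : ℝ}

lemma norm_sub_le_iInf_of_probeCriterion_le {θ₀ : Θ} (hnet : ∀ θ, ∃ θ' ∈ T, ‖G θ - G θ'‖ ≤ η)
    (ha : ∀ k, 0 < a k) (haA : ∀ k, a k ≤ A) (hbB : ∀ k, b k ≤ B) (hφ : ∀ k, ‖φ k‖ ≤ a k)
    (hz : ∀ k, |z k| ≤ b k)
    (hgood : ∀ θ ∈ T, ∀ ν ∈ T, G θ ≠ G ν → ∃ k, φ k (G θ - G ν) = ‖G θ - G ν‖)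
    (hmin : ∀ θ, probeCriterion φ a b z (f - G θ₀) ≤ probeCriterion φ a b z (f - G θ)) :
    ‖G θ₀ - f‖ ≤ (2 * A + 1) * (⨅ θ, ‖f - G θ‖) + 2 * B + 2 * η * (1 + A) := by
  have : Nonempty Θ := ⟨θ₀⟩
  have hA : 0 ≤ A := (ha (Classical.arbitrary K)).le.trans (haA _)
  rw [add_assoc, ← sub_le_iff_le_add, Real.mul_iInf_of_nonneg (by positivity)]
  refine le_ciInf fun θ => ?_
  obtain ⟨θ', hθ', hθη⟩ := hnet θ
  obtain ⟨θ₀', hθ₀', hθ₀η⟩ := hnet θ₀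
  have hdist : ‖G θ₀' - G θ'‖ ≤ 2 * A * ‖f - G θ‖ + 2 * B + 2 * η * A :=
    norm_sub_le_of_probeCriterion_le ha haA hbB hφ hz hθ₀η hθη (hgood _ hθ₀' _ hθ') (hmin θ)
  have htriangle : ‖G θ₀ - f‖ ≤ ‖G θ₀ - G θ₀'‖ + ‖G θ₀' - G θ'‖ + ‖G θ - G θ'‖ + ‖f - G θ‖ := by
    rw [norm_sub_rev (G θ), norm_sub_rev f]
    linarith [norm_sub_le_norm_sub_add_norm_sub (G θ₀) (G θ₀') f,
      norm_sub_le_norm_sub_add_norm_sub (G θ₀') (G θ') f,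
      norm_sub_le_norm_sub_add_norm_sub (G θ') (G θ) f]
  linarith

lemma integral_norm_sub_le_iInf_of_probeCriterion_le {Ω : Type*} [MeasurableSpace Ω]
    (P : Measure Ω) [IsProbabilityMeasure P] {L δ : ℝ} (hf : ‖f‖ ≤ L) (hG : ∀ θ, ‖G θ‖ ≤ L)
    (hnet : ∀ θ, ∃ θ' ∈ T, ‖G θ - G θ'‖ ≤ η)
    (ha : ∀ k, 0 < a k) (haA : ∀ k, a k ≤ A) (hb : ∀ k, 0 ≤ b k) (hbB : ∀ k, b k ≤ B)
    (hφ : ∀ k, ‖φ k‖ ≤ a k)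
    (hgood : ∀ θ ∈ T, ∀ ν ∈ T, G θ ≠ G ν → ∃ k, φ k (G θ - G ν) = ‖G θ - G ν‖)
    (Z : K → Ω → ℝ) (hZ : P.real {ω | ∃ k, b k < |Z k ω|} ≤ δ) (θhat : Ω → Θ)
    (hmin : ∀ ω θ, probeCriterion φ a b (Z · ω) (f - G (θhat ω)) ≤
      probeCriterion φ a b (Z · ω) (f - G θ))
    (hmeas : AEStronglyMeasurable (fun ω => ‖G (θhat ω) - f‖) P) :
    ∫ ω, ‖G (θhat ω) - f‖ ∂P ≤
      (2 * A + 1) * (⨅ θ, ‖f - G θ‖) + 2 * B + 2 * η * (1 + A) + 2 * L * δ := by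
  have hL : 0 ≤ L := (norm_nonneg f).trans hf
  have hbounded (ω : Ω) : ‖G (θhat ω) - f‖ ≤ 2 * L := by
    linarith [norm_sub_le (G (θhat ω)) f, hG (θhat ω)]
  have hint : Integrable (fun ω => ‖G (θhat ω) - f‖) P :=
    .of_bound hmeas (2 * L) <| .of_forall fun ω => by simpa only [norm_norm] using hbounded ω
  have horacle {ω : Ω} (hω : ω ∉ {ω | ∃ k, b k < |Z k ω|}) : ‖G (θhat ω) - f‖ ≤
      (2 * A + 1) * (⨅ θ, ‖f - G θ‖) + 2 * B + 2 * η * (1 + A) :=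
    norm_sub_le_iInf_of_probeCriterion_le hnet ha haA hbB hφ
      (fun k => not_lt.1 fun hk => hω ⟨k, hk⟩) hgood (hmin ω)
  have hA : 0 ≤ A := (ha (Classical.arbitrary K)).le.trans (haA _)
  have hB : 0 ≤ B := (hb (Classical.arbitrary K)).trans (hbB _)
  have hη : 0 ≤ η := by
    obtain ⟨ω⟩ := nonempty_of_isProbabilityMeasure P
    obtain ⟨θ', -, hθ'⟩ := hnet (θhat ω)
    exact (norm_nonneg _).trans hθ'
  have hinf : 0 ≤ ⨅ θ, ‖f - G θ‖ := Real.iInf_nonneg fun _ => norm_nonneg _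
  refine (integral_le_add_mul_measureReal hint (by positivity) hbounded fun ω => horacle).trans ?_
  gcongr

end OracleInequality

end ProbeCriterion

section LinearCombination

variable {E : Type*} [SeminormedAddCommGroup E] [NormedSpace ℝ E] {ι : Type*} [Fintype ι]
  {v : ι → E} {L : ℝ}

lemma norm_linearCombination_le (hv : ∀ i, ‖v i‖ ≤ L) (c : ι → ℝ) :
    ‖Fintype.linearCombination ℝ v c‖ ≤ L * ∑ i, |c i| := by
  rw [Fintype.linearCombination_apply, Finset.mul_sum]
  refine norm_sum_le_of_le _ fun i _ => ?_
  rw [norm_smul, Real.norm_eq_abs, mul_comm]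
  gcongr
  exact hv i

lemma norm_linearCombination_sub_le {r : ℝ} (hL : 0 ≤ L) (hv : ∀ i, ‖v i‖ ≤ L) {c c' : ι → ℝ}
    (hc : ∑ i, |c i - c' i| ≤ r) :
    ‖Fintype.linearCombination ℝ v c - Fintype.linearCombination ℝ v c'‖ ≤ L * r := by
  rw [← map_sub]
  exact (norm_linearCombination_le hv _).trans (mul_le_mul_of_nonneg_left hc hL)

end LinearCombination

section Lp

variable {X : Type*} [MeasurableSpace X] {μ : Measure X} {p q : ℝ≥0∞} {ψ : X → ℝ}

lemma toReal_eLpNorm_pos_of_pos (hp : p ≠ 0) (hψ : MemLp ψ p μ)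
    (hpos : 0 < (eLpNorm ψ q μ).toReal) : 0 < (eLpNorm ψ p μ).toReal := by
  refine ENNReal.toReal_pos (fun hzero => hpos.ne' ?_) hψ.eLpNorm_ne_top
  rw [eLpNorm_congr_ae ((eLpNorm_eq_zero_iff hψ.1 hp).1 hzero), eLpNorm_zero, ENNReal.toReal_zero]

lemma norm_toLp_sub_toLp {f g : X → ℝ} (hf : MemLp f p μ) (hg : MemLp g p μ) :
    ‖hf.toLp f - hg.toLp g‖ = (eLpNorm (fun t => f t - g t) p μ).toReal := by
  rw [← MemLp.toLp_sub, Lp.norm_toLp]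
  rfl

lemma linearCombination_toLp {ι : Type*} [Fintype ι] {F : ι → X → ℝ}
    (hF : ∀ i, MemLp (F i) p μ) (c : ι → ℝ) :
    Fintype.linearCombination ℝ (fun i => (hF i).toLp (F i)) c =
      (memLp_finsetSum Finset.univ fun i _ => (hF i).const_mul (c i)).toLp := by
  refine Lp.ext ?_
  rw [Fintype.linearCombination_apply]
  grw [Lp.coeFn_fun_finsetSum, MemLp.coeFn_toLp]
  have hterm (i : ι) : ⇑(c i • (hF i).toLp (F i)) =ᵐ[μ] fun t => c i * F i t := by
    grw [Lp.coeFn_smul, (hF i).coeFn_toLp]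
    rfl
  filter_upwards [ae_all_iff.2 hterm] with t ht
  exact Finset.sum_congr rfl fun i _ => ht i

variable [Fact (1 ≤ p)] [Fact (1 ≤ q)] [q.HolderConjugate p]

variable (p) in
/-- The functional `g ↦ ∫ ψ g` on `L^p` for `ψ` in the dual `L^q`, encoded through the Hölder
pairing of multiplication. -/
noncomputable def integralAgainst (hψ : MemLp ψ q μ) : StrongDual ℝ (Lp ℝ p μ) :=
  (ContinuousLinearMap.mul ℝ ℝ).lpPairing μ q p (hψ.toLp ψ)

lemma integralAgainst_toLp (hψ : MemLp ψ q μ) {g : X → ℝ} (hg : MemLp g p μ) :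
    integralAgainst p hψ (hg.toLp g) = ∫ t, ψ t * g t ∂μ := by
  rw [integralAgainst, ContinuousLinearMap.lpPairing_eq_integral]
  refine integral_congr_ae ?_
  filter_upwards [hψ.coeFn_toLp, hg.coeFn_toLp] with t hψt hgt
  rw [hψt, hgt, ContinuousLinearMap.mul_apply']

lemma norm_integralAgainst_le (hψ : MemLp ψ q μ) :
    ‖integralAgainst p hψ‖ ≤ (eLpNorm ψ q μ).toReal := by
  rw [← Lp.norm_toLp ψ hψ]
  refine ContinuousLinearMap.opNorm_le_bound _ (norm_nonneg _) fun g => ?_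
  calc ‖integralAgainst p hψ g‖ ≤ ‖(ContinuousLinearMap.mul ℝ ℝ).holder 1 (hψ.toLp ψ) g‖ :=
        (congrArg norm (L1.integral_eq' ℝ _).symm).trans_le (L1.norm_integral_le _)
    _ ≤ ‖ContinuousLinearMap.mul ℝ ℝ‖ * ‖hψ.toLp ψ‖ * ‖g‖ :=
        ContinuousLinearMap.norm_holder_apply_apply_le ..
    _ = ‖hψ.toLp ψ‖ * ‖g‖ := by rw [ContinuousLinearMap.opNorm_mul, one_mul]

lemma integralAgainst_toLp_sub_toLp (hψ : MemLp ψ q μ) {f g : X → ℝ} (hf : MemLp f p μ)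
    (hg : MemLp g p μ) :
    integralAgainst p hψ (hf.toLp f - hg.toLp g) = ∫ t, ψ t * (f t - g t) ∂μ := by
  rw [← MemLp.toLp_sub, integralAgainst_toLp]
  rfl

end Lp

lemma setOf_exists_lt_abs_subset {K Ω : Type*} [Finite K] {σ : K → ℝ} {ε κ : ℝ} (Z : K → Ω → ℝ)
    (hσ : ∀ k, 0 < σ k) (hε : 0 ≤ ε) :
    {ω | ∃ k, ε * κ * σ k < |ε * Z k ω|} ⊆ {ω | κ ≤ ⨆ k, |Z k ω| / σ k} := by
  rintro ω ⟨k, hk⟩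
  rw [abs_mul, abs_of_nonneg hε, mul_assoc] at hk
  have hκ : κ < |Z k ω| / σ k := (lt_div_iff₀ (hσ k)).2 (lt_of_mul_lt_mul_left hk hε)
  exact hκ.le.trans (le_ciSup (f := fun k => |Z k ω| / σ k) (Set.finite_range _).bddAbove k)

theorem stmt_12_general {X ι K Ω : Type*} [MeasurableSpace X] {μ : Measure X} [Fintype ι]
    [Finite K] [Nonempty K] [MeasurableSpace Ω] (P : Measure Ω) [IsProbabilityMeasure P]
    {p q : ℝ≥0∞} [q.HolderConjugate p] {f : X → ℝ} {F : ι → X → ℝ} {FL : (ι → ℝ) → X → ℝ}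
    (hFL : ∀ c t, FL c t = ∑ i, c i * F i t) (hf : MemLp f p μ) (hF : ∀ i, MemLp (F i) p μ)
    {L : ℝ} (hfbound : (eLpNorm f p μ).toReal ≤ L)
    (hFbound : ∀ i, (eLpNorm (F i) p μ).toReal ≤ L)
    {ε : ℝ} (hε : 0 ≤ ε) {Λ Λε : Set (ι → ℝ)} (hΛ : ∀ c ∈ Λ, ∑ i, |c i| ≤ 1) (hΛε : Λε ⊆ Λ)
    (hnet : ∀ c ∈ Λ, ∃ c' ∈ Λε, ∑ i, |c i - c' i| ≤ ε)
    {ψ : K → X → ℝ} (hψ : ∀ k, MemLp (ψ k) q μ) (hψ2 : ∀ k, MemLp (ψ k) 2 μ)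
    (hψpos : ∀ k, 0 < (eLpNorm (ψ k) q μ).toReal)
    (hgood : ∀ c ∈ Λε, ∀ c' ∈ Λε, FL c ≠ FL c' → ∃ k,
      ∫ t, ψ k t * (FL c t - FL c' t) ∂μ = (eLpNorm (fun t => FL c t - FL c' t) p μ).toReal)
    {δ κ : ℝ} (hκ : 0 ≤ κ) {Z : K → Ω → ℝ}
    (hZ : P.real {ω | κ ≤ ⨆ k, |Z k ω| / (eLpNorm (ψ k) 2 μ).toReal} ≤ δ)
    {M : (ι → ℝ) → Ω → ℝ}
    (hM : ∀ c ω, M c ω = ⨆ k, (|(∫ t, ψ k t * (f t - FL c t) ∂μ) + ε * Z k ω|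
      - ε * κ * (eLpNorm (ψ k) 2 μ).toReal) / (eLpNorm (ψ k) q μ).toReal)
    {chat : Ω → ι → ℝ} (hmem : ∀ ω, chat ω ∈ Λ) (hmin : ∀ ω, ∀ c ∈ Λ, M (chat ω) ω ≤ M c ω)
    (hmeas : AEStronglyMeasurable
      (fun ω => (eLpNorm (fun t => FL (chat ω) t - f t) p μ).toReal) P) :
    ∫ ω, (eLpNorm (fun t => FL (chat ω) t - f t) p μ).toReal ∂P ≤
      (2 * (⨆ k, (eLpNorm (ψ k) q μ).toReal) + 1) *
          (⨅ c : Λ, (eLpNorm (fun t => f t - FL c.1 t) p μ).toReal)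
        + 2 * κ * ε * (⨆ k, (eLpNorm (ψ k) 2 μ).toReal)
        + 2 * L * ε * (1 + ⨆ k, (eLpNorm (ψ k) q μ).toReal)
        + 2 * L * δ := by
  obtain rfl : FL = fun c t => ∑ i, c i * F i t := funext₂ hFL
  have : Fact (1 ≤ p) := ⟨ENNReal.HolderConjugate.one_le p q⟩
  have : Fact (1 ≤ q) := ⟨ENNReal.HolderConjugate.one_le q p⟩
  have hL : 0 ≤ L := ENNReal.toReal_nonneg.trans hfbound
  have hfn : ‖hf.toLp f‖ ≤ L := (Lp.norm_toLp f hf).trans_le hfbound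
  have hFn (i : ι) : ‖(hF i).toLp (F i)‖ ≤ L := (Lp.norm_toLp _ (hF i)).trans_le (hFbound i)
  set σ : K → ℝ := fun k => (eLpNorm (ψ k) 2 μ).toReal
  have hσ (k : K) : 0 < σ k := toReal_eLpNorm_pos_of_pos two_ne_zero (hψ2 k) (hψpos k)
  let G (c : Λ) : Lp ℝ p μ := Fintype.linearCombination ℝ (fun i => (hF i).toLp (F i)) c.1
  have hG (c : Λ) : ‖G c‖ ≤ L := (norm_linearCombination_le hFn c.1).trans
    (mul_le_of_le_one_right hL (hΛ c c.2))
  have hGnet (c : Λ) : ∃ c' ∈ {c : Λ | c.1 ∈ Λε}, ‖G c - G c'‖ ≤ L * ε := by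
    obtain ⟨c', hc', hdist⟩ := hnet c c.2
    exact ⟨⟨c', hΛε hc'⟩, hc', norm_linearCombination_sub_le hL hFn hdist⟩
  have hGgood (c) (hc : c.1 ∈ Λε) (c') (hc' : c'.1 ∈ Λε) (hne : G c ≠ G c') :
      ∃ k, integralAgainst p (hψ k) (G c - G c') = ‖G c - G c'‖ := by
    simp only [G, linearCombination_toLp, integralAgainst_toLp_sub_toLp,
      norm_toLp_sub_toLp] at hne ⊢
    exact hgood c hc c' hc' fun h => hne (by simp only [h])
  have horacle := integral_norm_sub_le_iInf_of_probeCriterion_le P (B := ε * κ * ⨆ k, σ k)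
    hfn hG hGnet hψpos (le_ciSup (Set.finite_range _).bddAbove)
    (fun k => by have := hσ k; positivity)
    (fun k => by gcongr; exact le_ciSup (Set.finite_range σ).bddAbove k)
    (fun k => norm_integralAgainst_le (hψ k)) (fun c hc c' => hGgood c hc c') _
    ((measureReal_mono (setOf_exists_lt_abs_subset Z hσ hε)).trans hZ)
    (fun ω => ⟨chat ω, hmem ω⟩)
    (fun ω c => by simpa only [G, probeCriterion, linearCombination_toLp,
      integralAgainst_toLp_sub_toLp, hM] using hmin ω c c.2)
    (by simpa only [G, linearCombination_toLp, norm_toLp_sub_toLp] using hmeas)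
  simp only [G, linearCombination_toLp, norm_toLp_sub_toLp] at horacle
  linarith

/-- Theorem 5 of the paper: oracle inequality for the convex
aggregation procedure based on a `(0,p)`-good probe set with respect to `G_{Λ_ε}`. -/
theorem stmt_12
    {d N : ℕ} (hd : 1 ≤ d) (hN : 1 ≤ N)
    (p q : ℝ≥0∞) (hp : 1 ≤ p) (hpq : 1 / p + 1 / q = 1)
    (f : (Fin d → ℝ) → ℝ) (F : Fin N → (Fin d → ℝ) → ℝ)
    (FL : (Fin N → ℝ) → (Fin d → ℝ) → ℝ)
    (hFL : ∀ lam t, FL lam t = ∑ i, lam i * F i t)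
    (hfm : Measurable f) (hFm : ∀ i, Measurable (F i))
    (L : ℝ) (hL0 : 0 ≤ L)
    (hfL : eLpNorm f p (cubeMeasure d) ≤ ENNReal.ofReal L)
    (hFLb : ∀ i, eLpNorm (F i) p (cubeMeasure d) ≤ ENNReal.ofReal L)
    (ε : ℝ) (hε0 : 0 < ε) (hε1 : ε < 1)
    -- the finite `ε`-net `Λ_ε` of the simplex in `ℓ¹`-norm
    (Λε : Finset (Fin N → ℝ))
    (hΛsub : ∀ lam ∈ Λε, lam ∈ simplex N)
    (hnet : ∀ lam ∈ simplex N, ∃ lam' ∈ Λε, ∑ i, |lam i - lam' i| ≤ ε)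
    -- `Ψ`, a `(0,p)`-good set with respect to `G_{Λ_ε}`
    {K : Type} [Fintype K] [Nonempty K]
    (ψ : K → (Fin d → ℝ) → ℝ) (hψm : ∀ k, Measurable (ψ k))
    (hψq : ∀ k, eLpNorm (ψ k) q (cubeMeasure d) ≠ ⊤)
    (hψ2 : ∀ k, eLpNorm (ψ k) 2 (cubeMeasure d) ≠ ⊤)
    (hψpos : ∀ k, 0 < Lnorm q (ψ k))
    (hgood : ∀ lam ∈ Λε, ∀ nu ∈ Λε,
      FL lam ≠ FL nu →
      ∃ k, (∫ t, ψ k t * (FL lam t - FL nu t) ∂(cubeMeasure d)) =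
        Lnorm p (fun t => FL lam t - FL nu t))
    -- the aggregation procedure
    {Ω : Type} [MeasurableSpace Ω] (P : Measure Ω) [IsProbabilityMeasure P]
    (δ : ℝ) (hδ0 : 0 < δ) (hδ1 : δ < 1)
    (Z : K → Ω → ℝ) (hZm : ∀ k, Measurable (Z k))
    (κ : ℝ) (hκpos : 0 < κ)
    (hκ : (P {ω | κ ≤ ⨆ k, |Z k ω| / Lnorm 2 (ψ k)}).toReal ≤ δ)
    (M : (Fin N → ℝ) → Ω → ℝ)
    (hM : ∀ lam ω, M lam ω = ⨆ k,
      (|(∫ t, ψ k t * (f t - FL lam t) ∂(cubeMeasure d)) + ε * Z k ω|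
          - ε * κ * Lnorm 2 (ψ k)) / Lnorm q (ψ k))
    (lamhat : Ω → Fin N → ℝ)
    (hmem : ∀ ω, lamhat ω ∈ simplex N)
    (hminM : ∀ ω, ∀ lam ∈ simplex N, M (lamhat ω) ω ≤ M lam ω)
    (hmeasE : Measurable fun ω => Lnorm p (fun t => FL (lamhat ω) t - f t)) :
    ∫ ω, Lnorm p (fun t => FL (lamhat ω) t - f t) ∂P ≤
      (2 * (⨆ k, Lnorm q (ψ k)) + 1) *
          (⨅ lam : simplex N, Lnorm p (fun t => f t - FL lam.1 t))
        + 2 * κ * ε * (⨆ k, Lnorm 2 (ψ k))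
        + 2 * L * ε * (1 + ⨆ k, Lnorm q (ψ k))
        + 2 * L * δ := by
  have : q.HolderConjugate p := ENNReal.holderConjugate_iff.2 (by simpa [add_comm] using hpq)
  exact stmt_12_general P hFL ⟨hfm.aestronglyMeasurable, hfL.trans_lt ENNReal.ofReal_lt_top⟩
    (fun i => ⟨(hFm i).aestronglyMeasurable, (hFLb i).trans_lt ENNReal.ofReal_lt_top⟩)
    (ENNReal.toReal_le_of_le_ofReal hL0 hfL)
    (fun i => ENNReal.toReal_le_of_le_ofReal hL0 (hFLb i)) hε0.le
    (fun lam hlam => by simpa only [abs_of_nonneg (hlam.1 _)] using hlam.2) hΛsub hnet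
    (fun k => ⟨(hψm k).aestronglyMeasurable, (hψq k).lt_top⟩)
    (fun k => ⟨(hψm k).aestronglyMeasurable, (hψ2 k).lt_top⟩) hψpos hgood hκpos.le hκ hM hmem
    hminM hmeasE.aestronglyMeasurable
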